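/- arXiv:1712.08882 — 3 statements merged into one kernel-verified Lean document; each statement's English description precedes it below -/
import Mathlib

section
/- Let a ≥ 2 be an integer and let X ⊆ [0,1] be a closed, perfect, transitive and non-trivial T_a-invariant set. If f(x) = rx + t is an affine map with r ≠ 0 and f(X) ⊆ X, then log_a|r| ∈ ℚ. -/
/-!
The circle image of any infinite closed `T_a`-invariant set `X` that is mapped into itself by an
affine map of ratio `r`, with `log_a |r|` irrational, is the whole circle; this contradicts
`X ≠ [0,1]`. Write `Y = X + ℤ`, so that `aY ⊆ Y`.

Composing iterates of `f` with multiplication by `a` shows that for all `k, n ∈ ℕ` some translate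
of `a ^ k * r ^ (2 * n) * X` lies in `Y` (`exists_translate`). Boundedness and infinity of `X`
force `|r| ≤ 1`, so irrationality of `log_a |r|` makes these ratios dense in `(0, ∞)`
(`exists_nat_pow_mul_pow_mem_Ioo`).

On the other hand, a set with an accumulation point `p` contains arbitrarily long sequences
tending to `p` as lacunarily as desired, and for a lacunary sequence `x i - p` one can prescribe all
the residues `s * (x i - p) mod 1` up to `ε` by a suitable choice of `s`, even on a whole interval
of values of `s` (`exists_Ioo_approx`). Prescribing the residues `i / N` for `i < N` and choosing
`s` of the form `a ^ k * r ^ (2 * n)` yields a translate of a `1 / N`-dense subset of the circle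
inside a small neighbourhood of `Y`. Hence `Y` is dense and `X = [0,1]`.
-/

open Filter Topology Set MeasureTheory ENNReal

/-- `T_a x = a x mod 1` on `[0,1]`. -/
noncomputable def Ta (a : ℕ) (x : ℝ) : ℝ := Int.fract (a * x)

/-- `T_a` on the circle `ℝ/ℤ`. -/
noncomputable def TaC (a : ℕ) (x : AddCircle (1:ℝ)) : AddCircle (1:ℝ) := a • x

/-- the `a`-adic fractional part `{s}_a = -log_a |s| mod 1`, as an element of `ℝ/ℤ`. -/
noncomputable def fracPart (a : ℕ) (s : ℝ) : AddCircle (1:ℝ) :=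
  ((-Real.logb a |s| : ℝ) : AddCircle (1:ℝ))

/-- the `a`-adic local difference set `F_{a,X}(x)` of `X ⊆ ℝ` at `x`. -/
def localDiffSet (a : ℕ) (X : Set ℝ) (x : ℝ) : Set (AddCircle (1:ℝ)) :=
  { t | ∃ u v : ℕ → ℝ,
      (∀ n, u n ∈ X) ∧ (∀ n, v n ∈ X) ∧ (∀ n, u n ≠ v n) ∧
      Tendsto u atTop (nhds x) ∧ Tendsto v atTop (nhds x) ∧
      Tendsto (fun n => fracPart a (u n - v n)) atTop (nhds t) }

/-- `F_{a,X}(X) = ⋃_{x ∈ X} F_{a,X}(x)`. -/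
def localDiffSetTotal (a : ℕ) (X : Set ℝ) : Set (AddCircle (1:ℝ)) :=
  ⋃ x ∈ X, localDiffSet a X x

/-- the `a`-adic local difference set of `X ⊆ ℝ/ℤ` at `x ∈ ℝ/ℤ`, defined via lifts:
the difference `u n - v n` is lifted to a real number `d n` tending to `0`. -/
def localDiffSetC (a : ℕ) (X : Set (AddCircle (1:ℝ))) (x : AddCircle (1:ℝ)) :
    Set (AddCircle (1:ℝ)) :=
  { t | ∃ (u v : ℕ → AddCircle (1:ℝ)) (d : ℕ → ℝ),
      (∀ n, u n ∈ X) ∧ (∀ n, v n ∈ X) ∧ (∀ n, u n ≠ v n) ∧ (∀ n, d n ≠ 0) ∧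
      (∀ n, ((d n : ℝ) : AddCircle (1:ℝ)) = u n - v n) ∧
      Tendsto u atTop (nhds x) ∧ Tendsto v atTop (nhds x) ∧
      Tendsto d atTop (nhds 0) ∧
      Tendsto (fun n => fracPart a (d n)) atTop (nhds t) }

/-- `F_{a,X}(X)` for `X ⊆ ℝ/ℤ`. -/
def localDiffSetTotalC (a : ℕ) (X : Set (AddCircle (1:ℝ))) : Set (AddCircle (1:ℝ)) :=
  ⋃ x ∈ X, localDiffSetC a X x

/-- a point whose forward orbit `{T_a^n x : n ≥ 1}` is dense in `X`. -/
noncomputable def IsTransitivePoint (a : ℕ) (X : Set ℝ) (x : ℝ) : Prop :=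
  X ⊆ closure {y | ∃ n : ℕ, 1 ≤ n ∧ (Ta a)^[n] x = y}

/-- a `C²`-diffeomorphism of `ℝ`. -/
def IsC2Diffeo (f : ℝ → ℝ) : Prop :=
  ContDiff ℝ 2 f ∧ Function.Bijective f ∧ ∀ x, deriv f x ≠ 0

/-- a `C¹`-diffeomorphism of `ℝ`. -/
def IsC1Diffeo (f : ℝ → ℝ) : Prop :=
  ContDiff ℝ 1 f ∧ Function.Bijective f ∧ ∀ x, deriv f x ≠ 0

/-- piecewise curved: `f` is `C¹` and `f'` is strictly monotone near every point outside
a discrete set. -/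
def PiecewiseCurved (f : ℝ → ℝ) : Prop :=
  ContDiff ℝ 1 f ∧ ∃ E : Set ℝ, DiscreteTopology E ∧
    ∀ x : ℝ, x ∉ E → ∃ U ∈ nhds x, StrictMonoOn (deriv f) U ∨ StrictAntiOn (deriv f) U

/-- `X` is self-restricted: `X - X ≠ [0,1] mod 1`. -/
def SelfRestricted (X : Set ℝ) : Prop :=
  {t : AddCircle (1:ℝ) | ∃ x ∈ X, ∃ y ∈ X, ((x - y : ℝ) : AddCircle (1:ℝ)) = t} ≠ Set.univ

/-- the covering number `N(X,r)`: minimal number of `r`-balls needed to cover `X`. -/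
noncomputable def coveringNumber (r : ℝ) (X : Set ℝ) : ℝ≥0∞ :=
  ⨅ (s : Finset ℝ) (_ : X ⊆ ⋃ c ∈ s, Metric.ball c r), (s.card : ℝ≥0∞)

/-- upper box (Minkowski) dimension. -/
noncomputable def upperBoxDim (X : Set ℝ) : ℝ≥0∞ :=
  Filter.limsup
    (fun r : ℝ =>
      if coveringNumber r X = ⊤ then ⊤
      else ENNReal.ofReal (Real.log (coveringNumber r X).toReal / Real.log (1 / r)))
    (nhdsWithin 0 (Set.Ioi (0:ℝ)))

/-- a probability measure has dimension `t`: it gives mass `< 1` to every Borel set of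
Hausdorff dimension `< t`, and is supported on a Borel set of Hausdorff dimension `t`. -/
def HasDimension (μ : Measure ℝ) (t : ℝ≥0∞) : Prop :=
  (∀ E : Set ℝ, MeasurableSet E → dimH E < t → μ E < 1) ∧
  ∃ S : Set ℝ, MeasurableSet S ∧ dimH S = t ∧ μ Sᶜ = 0

/-- a piecewise `C²`-diffeomorphism of `ℝ` (relative to `X`): a finite partition of `ℝ` into
intervals, on each of which `f` restricts to a `C²`-diffeomorphism onto its image (except
possibly at the endpoints, which lie outside `X`). -/
def IsPiecewiseC2Diffeo (f : ℝ → ℝ) (X : Set ℝ) : Prop :=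
  ∃ (N : ℕ) (I : Fin N → Set ℝ),
    (∀ i, (I i).OrdConnected) ∧
    (⋃ i, I i) = Set.univ ∧
    Pairwise (Function.onFun Disjoint I) ∧
    (∀ i, ContinuousOn f (I i)) ∧
    (∀ i, Set.InjOn f (I i)) ∧
    (∀ i, ContDiffOn ℝ 2 f (interior (I i))) ∧
    (∀ i, ∀ x ∈ interior (I i), deriv f x ≠ 0) ∧
    (∀ i, frontier (I i) ∩ X = ∅)

/-- The points `k - n * ξ` with `k, n ∈ ℕ` are dense in `ℝ` when `ξ > 0` is irrational. -/
lemma exists_nat_sub_mul_mem_Ioo {ξ : ℝ} (hξ : Irrational ξ) (h0 : 0 < ξ) {α β : ℝ}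
    (hαβ : α < β) : ∃ k n : ℕ, (k : ℝ) - n * ξ ∈ Ioo α β := by
  -- Shifting the target to the right by `N * ξ` makes the integer `k` automatically nonnegative.
  obtain ⟨N, hN⟩ : ∃ N : ℕ, -α < N * ξ := by
    obtain ⟨N, hN⟩ := exists_nat_gt (-α / ξ)
    exact ⟨N, by rwa [div_lt_iff₀ h0] at hN⟩
  have hd : DenseRange (fun m : ℕ => m • ((-ξ : ℝ) : AddCircle (1 : ℝ))) := by
    rw [← denseRange_zsmul_iff_nsmul, AddCircle.denseRange_zsmul_coe_iff]
    simpa using hξ.neg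
  have hU : IsOpen ((fun z : ℝ => (z : AddCircle (1 : ℝ))) '' Ioo (α + N * ξ) (β + N * ξ)) :=
    QuotientAddGroup.isOpenMap_coe _ isOpen_Ioo
  have hne : (Ioo (α + N * ξ) (β + N * ξ)).Nonempty := nonempty_Ioo.2 (by linarith)
  obtain ⟨m, z, ⟨hz1, hz2⟩, hz⟩ := hd.exists_mem_open hU (hne.image _)
  have hz' : ((z - m * (-ξ) : ℝ) : AddCircle (1 : ℝ)) = 0 := by
    have h1 : ((m * (-ξ) : ℝ) : AddCircle (1 : ℝ)) = m • ((-ξ : ℝ) : AddCircle (1 : ℝ)) := by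
      rw [← AddCircle.coe_nsmul, nsmul_eq_mul]
    rw [AddCircle.coe_sub, h1, ← hz, sub_self]
  obtain ⟨j, hj⟩ := (AddCircle.coe_eq_zero_iff (1 : ℝ)).1 hz'
  simp only [zsmul_eq_mul, mul_one] at hj
  have hmξ : 0 ≤ (m : ℝ) * ξ := by positivity
  have hj0 : 0 ≤ j := by
    have : (0 : ℝ) < j := by linarith
    exact_mod_cast this.le
  lift j to ℕ using hj0
  refine ⟨j, N + m, ?_, ?_⟩ <;> push_cast at hj ⊢ <;> linarith

/-- The numbers `a ^ k * ρ ^ n` with `k, n ∈ ℕ` are dense in `(0, ∞)` when `0 < ρ < 1` and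
`log_a ρ` is irrational. -/
lemma exists_nat_pow_mul_pow_mem_Ioo {a ρ : ℝ} (ha : 1 < a) (hρ0 : 0 < ρ) (hρ1 : ρ < 1)
    (hirr : Irrational (Real.logb a ρ)) {α β : ℝ} (hα : 0 < α) (hαβ : α < β) :
    ∃ k n : ℕ, a ^ k * ρ ^ n ∈ Ioo α β := by
  have hlt : Real.logb a α < Real.logb a β := Real.logb_lt_logb ha hα hαβ
  obtain ⟨k, n, h1, h2⟩ := exists_nat_sub_mul_mem_Ioo hirr.neg
    (neg_pos.2 (Real.logb_neg ha hρ0 hρ1)) hlt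
  have ha0 : 0 < a := by linarith
  have hpos : 0 < a ^ k * ρ ^ n := by positivity
  have key : Real.logb a (a ^ k * ρ ^ n) = k - n * -Real.logb a ρ := by
    rw [Real.logb_mul (by positivity) (by positivity), Real.logb_pow, Real.logb_pow,
      Real.logb_self_eq_one ha]
    ring
  rw [← key] at h1 h2
  exact ⟨k, n, (Real.logb_lt_logb_iff ha hα hpos).1 h1,
    (Real.logb_lt_logb_iff ha hpos (hα.trans hαβ)).1 h2⟩

/-- Lacunarity argument: near an accumulation point `p` of `X`, any finite list of residues `θ i`
can be realized modulo `1`, up to `ε`, by `s * (x - p)` with `x ∈ X`, simultaneously for all `s` in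
a nonempty interval; such intervals exist in every interval of a fixed length `L`. -/
lemma exists_Ioo_approx {X : Set ℝ} {p : ℝ} (hp : p ∈ closure (X \ {p})) (θ : ℕ → ℝ) {ε : ℝ}
    (hε : 0 < ε) (K : ℕ) : ∃ L : ℝ, 0 < L ∧ ∀ A : ℝ, ∃ α β : ℝ, A ≤ α ∧ α < β ∧ β ≤ A + L ∧
      ∀ s ∈ Ioo α β, ∀ i < K, ∃ x ∈ X, ∃ m : ℤ, |s * (x - p) - θ i - m| ≤ ε := by
  induction K with
  | zero => exact ⟨1, one_pos, fun A => ⟨A, A + 1, le_rfl, by linarith, le_rfl, by simp⟩⟩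
  | succ K ih =>
    obtain ⟨L, hL, ih⟩ := ih
    obtain ⟨x, ⟨hxX, hxp⟩, hx⟩ := Metric.mem_closure_iff.1 hp (ε / L) (by positivity)
    have hxp' : x - p ≠ 0 := sub_ne_zero.2 hxp
    set y := x - p with hy
    have hyL : |y| * L < ε := by
      rw [dist_comm, Real.dist_eq, lt_div_iff₀ hL] at hx
      exact hx
    have hy0 : 0 < |y| := abs_pos.2 hxp'
    refine ⟨L + 1 / |y|, by positivity, fun A => ?_⟩
    -- `s₀` solves `s₀ * y ≡ θ K` exactly, and `y` is so small that the whole interval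
    -- `[s₀, s₀ + L]` solves it up to `ε`.
    obtain ⟨s₀, hs1, hs2, m, hm⟩ : ∃ s₀, A ≤ s₀ ∧ s₀ ≤ A + 1 / |y| ∧
        ∃ m : ℤ, s₀ * y = θ K + m := by
      have hfr0 := Int.fract_nonneg ((θ K / y - A) * |y|)
      have hfr1 := Int.fract_lt_one ((θ K / y - A) * |y|)
      refine ⟨A + Int.fract ((θ K / y - A) * |y|) / |y|, ?_, ?_, ?_⟩
      · have := div_nonneg hfr0 hy0.le
        linarith
      · gcongr
      · rcases abs_choice y with h | h
        · refine ⟨-⌊(θ K / y - A) * |y|⌋, ?_⟩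
          rw [Int.fract, h]
          push_cast
          field_simp
          ring
        · refine ⟨⌊(θ K / y - A) * |y|⌋, ?_⟩
          rw [Int.fract, h]
          field_simp
          ring
    obtain ⟨α, β, hα, hαβ, hβ, H⟩ := ih s₀
    refine ⟨α, β, by linarith, hαβ, by linarith, fun s hs i hi => ?_⟩
    rcases Nat.lt_succ_iff_lt_or_eq.1 hi with hi | rfl
    · exact H s hs i hi
    · refine ⟨x, hxX, m, ?_⟩
      have h1 : s * (x - p) - θ i - m = (s - s₀) * y := by rw [← hy]; linarith
      rw [h1, abs_mul, abs_of_nonneg (by linarith [hs.1])]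
      nlinarith [hs.2]

/-- For all `k, n` some translate of `a ^ k * ρ ^ n * X` is contained in `X + ℤ`, if `X` is
`T_a`-invariant and contains a translate of `ρ * X`. -/
lemma exists_translate {a : ℕ} {X : Set ℝ} (hXinv : MapsTo (Ta a) X X) {ρ τ : ℝ}
    (hf : ∀ x ∈ X, ρ * x + τ ∈ X) (k n : ℕ) :
    ∃ c : ℝ, ∀ x ∈ X, ∃ m : ℤ, (a : ℝ) ^ k * ρ ^ n * x + c - m ∈ X := by
  induction k with
  | zero =>
    induction n with
    | zero => exact ⟨0, fun x hx => ⟨0, by simpa using hx⟩⟩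
    | succ n ih =>
      obtain ⟨c, hc⟩ := ih
      refine ⟨c + ρ ^ n * τ, fun x hx => ?_⟩
      obtain ⟨m, hm⟩ := hc _ (hf x hx)
      refine ⟨m, ?_⟩
      convert hm using 1
      ring
  | succ k ih =>
    obtain ⟨c, hc⟩ := ih
    refine ⟨a * c, fun x hx => ?_⟩
    obtain ⟨m, hm⟩ := hc x hx
    have h := hXinv hm
    rw [Ta, Int.fract] at h
    refine ⟨a * m + ⌊(a : ℝ) * ((a : ℝ) ^ k * ρ ^ n * x + c - m)⌋, ?_⟩
    convert h using 1
    push_cast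
    ring

/-- A bounded set with two distinct points contains no translate of `ρ` times itself with
`|ρ| > 1`. -/
lemma abs_le_one_of_maps {X : Set ℝ} (hXsub : X ⊆ Icc 0 1) (hX : X.Nontrivial) {ρ τ : ℝ}
    (hf : ∀ x ∈ X, ρ * x + τ ∈ X) : |ρ| ≤ 1 := by
  by_contra! h
  obtain ⟨u, hu, v, hv, huv⟩ := hX
  have key : ∀ n : ℕ, ∃ u' ∈ X, ∃ v' ∈ X, u' - v' = ρ ^ n * (u - v) := by
    intro n
    induction n with
    | zero => exact ⟨u, hu, v, hv, by simp⟩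
    | succ n ih =>
      obtain ⟨u', hu', v', hv', h'⟩ := ih
      exact ⟨_, hf _ hu', _, hf _ hv', by rw [pow_succ]; linear_combination ρ * h'⟩
  have huv0 : 0 < |u - v| := abs_pos.2 (sub_ne_zero.2 huv)
  obtain ⟨n, hn⟩ := pow_unbounded_of_one_lt (1 / |u - v|) h
  rw [div_lt_iff₀ huv0, ← abs_pow, ← abs_mul] at hn
  obtain ⟨u', hu', v', hv', h'⟩ := key n
  rw [← h'] at hn
  have h1 := hXsub hu'
  have h2 := hXsub hv'
  have : |u' - v'| ≤ 1 := abs_le.2 ⟨by linarith [h1.1, h2.2], by linarith [h1.2, h2.1]⟩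
  linarith

/-- **Theorem 1.2(1).** If `X ⊆ [0,1]` is a closed, perfect, transitive, non-trivial
`T_a`-invariant set and `f(x) = r x + t` is affine with `r ≠ 0` and `f(X) ⊆ X`, then
`log_a |r| ∈ ℚ`. -/
theorem affine_self_map_commensurable
    (a : ℕ) (ha : 2 ≤ a) (X : Set ℝ) (hXsub : X ⊆ Set.Icc 0 1)
    (hXcl : IsClosed X) (hXperf : ∀ x ∈ X, x ∈ closure (X \ {x}))
    (hXtrans : ∃ x ∈ X, IsTransitivePoint a X x)
    (hXinf : X.Infinite) (hXne : X ≠ Set.Icc 0 1)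
    (hXinv : Set.MapsTo (Ta a) X X)
    (r t : ℝ) (hr : r ≠ 0)
    (himg : (fun x => r * x + t) '' X ⊆ X) :
    ∃ q : ℚ, Real.logb a |r| = q := by
  by_contra! hq
  have hirr : Irrational (Real.logb a |r|) := fun ⟨q, h⟩ => hq q h.symm
  have hf : ∀ x ∈ X, r * x + t ∈ X := fun x hx => himg ⟨x, hx, rfl⟩
  have ha1 : (1 : ℝ) < a := by exact_mod_cast ha
  have hr0 : 0 < |r| := abs_pos.2 hr
  have hr1 : |r| < 1 := by
    refine lt_of_le_of_ne (abs_le_one_of_maps hXsub hXinf.nontrivial hf) fun h => hq 0 ?_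
    simp [h]
  -- The second iterate of `f` has the positive ratio `r ^ 2`.
  have hf2 : ∀ x ∈ X, r ^ 2 * x + (r * t + t) ∈ X := fun x hx => by
    convert hf _ (hf x hx) using 1
    ring
  have hρ0 : 0 < r ^ 2 := by positivity
  have hρ1 : r ^ 2 < 1 := (sq_lt_one_iff_abs_lt_one r).2 hr1
  have hirr2 : Irrational (Real.logb a (r ^ 2)) := by
    rw [← sq_abs, Real.logb_pow]
    exact_mod_cast hirr.natCast_mul two_ne_zero
  obtain ⟨p, hpX⟩ := hXinf.nonempty
  apply hXne
  refine hXsub.antisymm ?_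
  rw [← closure_Ioo (zero_ne_one' ℝ)]
  refine closure_minimal (fun y₀ hy₀ => ?_) hXcl
  rw [← hXcl.closure_eq]
  refine Metric.mem_closure_iff.2 fun δ hδ => ?_
  -- An approximation of `y₀ ∈ (0,1)` by `X + ℤ` within `ε` is an approximation by `X` itself.
  obtain ⟨ε, hε, hε1, hε2, hε3⟩ : ∃ ε : ℝ, 0 < ε ∧ ε < δ ∧ ε ≤ y₀ / 2 ∧ ε ≤ (1 - y₀) / 2 := by
    refine ⟨min (δ / 2) (min (y₀ / 2) ((1 - y₀) / 2)), ?_, ?_, ?_, ?_⟩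
    · have h1 := hy₀.1
      have h2 := hy₀.2
      exact lt_min (by linarith) (lt_min (by linarith) (by linarith))
    · exact (min_le_left _ _).trans_lt (by linarith)
    · exact (min_le_right _ _).trans (min_le_left _ _)
    · exact (min_le_right _ _).trans (min_le_right _ _)
  obtain ⟨N, hN⟩ := exists_nat_gt (2 / ε)
  have hN0 : (0 : ℝ) < N := lt_trans (by positivity) hN
  have hNε : 1 / (N : ℝ) < ε / 2 := by
    rw [div_lt_iff₀ hε] at hN
    rw [div_lt_iff₀ hN0]
    linarith
  obtain ⟨L, -, hL⟩ := exists_Ioo_approx (hXperf p hpX) (fun i => (i : ℝ) / N) (half_pos hε) N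
  obtain ⟨α, β, hα, hαβ, -, H⟩ := hL 1
  obtain ⟨k, n, hs⟩ :=
    exists_nat_pow_mul_pow_mem_Ioo ha1 hρ0 hρ1 hirr2 (by linarith : 0 < α) hαβ
  obtain ⟨c, hc⟩ := exists_translate hXinv hf2 k n
  set s : ℝ := (a : ℝ) ^ k * (r ^ 2) ^ n
  -- Rounding `z` down, modulo `1`, to a multiple `i / N` selects the residue whose point in `Y`
  -- lies near `y₀`.
  set z : ℝ := y₀ - (s * p + c) with hz
  have hz0 := Int.fract_nonneg z
  have hz1 := Int.fract_lt_one z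
  have hfl := Nat.floor_le (mul_nonneg hz0 hN0.le)
  have hfl' := Nat.lt_floor_add_one (Int.fract z * N)
  have hi : ⌊Int.fract z * N⌋₊ < N := by
    rw [Nat.floor_lt (by positivity)]
    nlinarith
  obtain ⟨x, hxX, m, hm⟩ := H s hs _ hi
  obtain ⟨m', hm'⟩ := hc x hxX
  set i := ⌊Int.fract z * N⌋₊
  have hi1 : (i : ℝ) / N ≤ Int.fract z := by rwa [div_le_iff₀ hN0]
  have hi2 : Int.fract z < i / N + 1 / N := by rwa [← add_div, lt_div_iff₀ hN0]
  have hzf := Int.floor_add_fract z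
  set w := s * x + c - m' with hw
  obtain ⟨hm1, hm2⟩ := abs_le.1 hm
  have hd : |y₀ - w - ((⌊z⌋ - m + m' : ℤ) : ℝ)| < ε := by
    rw [abs_lt]
    push_cast
    constructor <;> linarith
  obtain ⟨hd1, hd2⟩ := abs_lt.1 hd
  obtain ⟨hw0, hw1⟩ := hXsub hm'
  obtain ⟨hy1, hy2⟩ := hy₀
  have hj : ⌊z⌋ - m + m' = 0 := by
    generalize ⌊z⌋ - m + m' = j at hd1 hd2
    have h1 : (j : ℝ) < 1 := by linarith
    have h2 : (-1 : ℝ) < j := by linarith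
    have h1' : j < 1 := by exact_mod_cast h1
    have h2' : -1 < j := by exact_mod_cast h2
    omega
  rw [hj] at hd
  refine ⟨w, hm', lt_trans ?_ hε1⟩
  rw [Real.dist_eq]
  simpa using hd
end

section
/- Let a ≥ 2 be an integer and let X ⊆ [0,1] be an infinite closed minimal T_a-invariant set. If f : ℝ → ℝ is a C¹ embedding (a C¹ map with nowhere vanishing derivative that is a homeomorphism onto its image) and f(X) ⊆ X, then log_a|f'(x)| ∈ ℚ for every x ∈ X. -/
/-!
The proof compares two invariants of `X`: the local difference sets and the global set of
differences modulo `1`.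

For `x ∈ X` let `limitDiffs a X x` be the closed set of limits of `-log_a |u - v| mod 1` over
distinct `u, v ∈ X` tending to `x`. It is nonempty at an accumulation point of `X`. The map `T_a`
is locally affine with slope `a` on `X` (an infinite minimal set avoids `0` and `1`), and
multiplying a difference by `a` does not change its fractional part, so minimality shows that the
set does not depend on `x` (`limitDiffs_subset`). A `C¹` embedding `f` with `f(X) ⊆ X` multiplies
infinitesimal differences at `x` by `f' x`, so the common set is invariant under translation by
`-log_a |f' x|` (`add_mem_limitDiffs`). If this number is irrational, the set is the whole circle
(`eq_univ_of_add_mem`). Magnifying small differences by powers of `a` then gives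
`X - X = ℝ/ℤ` (`exists_sub_eq_of_limitDiffs`).

This is impossible for an infinite minimal set (`not_forall_exists_sub_eq`). Indeed, fix `y ∈ X`.
Every `t = k / (a ^ p - 1)` is fixed by `T_a ^ p` and is a difference of points of `X`, so by
minimality some `y + a ^ j t` with `j < p` lies in `X` (`exists_add_orbit_mem`). Hence at least
`(a ^ p - 1) / p` words of length `p` begin base-`a` expansions of points of `X`
(`le_mul_ncard_words`). But `X` is bounded away from `0`, so some word `0 ⋯ 0` of length `m` is
forbidden, and by submultiplicativity there are at most `(a ^ m - 1) ^ n` words of length `m n`.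
-/

open Filter Topology Set MeasureTheory ENNReal

/-! ### Iterates of `T_a` and local difference sets -/

section dynamics

variable {a : ℕ} {X : Set ℝ}

/-- Iterates of `T_a` in closed form; at `n = 0` the identity `x = fract x` needs `x < 1`. -/
lemma Ta_iterate (a : ℕ) {x : ℝ} (hx : x ∈ Ico (0 : ℝ) 1) (n : ℕ) :
    (Ta a)^[n] x = Int.fract ((a : ℝ) ^ n * x) := by
  induction n with
  | zero => simp [Int.fract_eq_self.2 hx]
  | succ n ih =>
    rw [Function.iterate_succ_apply', ih, Ta, Int.fract_eq_fract]
    refine ⟨-(a * ⌊(a : ℝ) ^ n * x⌋), ?_⟩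
    rw [Int.fract]
    push_cast
    ring

lemma coe_fract (x : ℝ) : ((Int.fract x : ℝ) : AddCircle (1 : ℝ)) = (x : AddCircle (1 : ℝ)) := by
  rw [← sub_eq_zero, ← AddCircle.coe_sub, AddCircle.coe_eq_zero_iff]
  exact ⟨-⌊x⌋, by rw [zsmul_one, Int.fract]; push_cast; ring⟩

lemma coe_Ta_iterate (a : ℕ) (x : ℝ) (n : ℕ) :
    (((Ta a)^[n] x : ℝ) : AddCircle (1 : ℝ)) = a ^ n • (x : AddCircle (1 : ℝ)) := by
  induction n with
  | zero => simp
  | succ n ih =>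
    rw [Function.iterate_succ_apply', Ta, coe_fract, ← nsmul_eq_mul, AddCircle.coe_nsmul, ih,
      pow_succ', mul_smul]

lemma iterate_mem (hXinv : MapsTo (Ta a) X X) (n : ℕ) {x : ℝ} (hx : x ∈ X) :
    (Ta a)^[n] x ∈ X := hXinv.iterate n hx

/-- An infinite minimal set omits `0` (a fixed point) and `1` (a preimage of `0`), the only
points at which `T_a` restricted to `X` could be discontinuous. -/
lemma subset_Ioo (hXsub : X ⊆ Icc 0 1) (hXinf : X.Infinite) (hXinv : MapsTo (Ta a) X X)
    (hXmin : ∀ x ∈ X, IsTransitivePoint a X x) : X ⊆ Ioo 0 1 := by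
  have h0 : (0 : ℝ) ∉ X := by
    intro h0
    have hfix : ∀ n, (Ta a)^[n] 0 = 0 := fun n => Function.iterate_fixed (by simp [Ta]) n
    refine hXinf ((finite_singleton (0 : ℝ)).subset ((hXmin 0 h0).trans ?_))
    refine closure_minimal ?_ isClosed_singleton
    rintro y ⟨n, -, rfl⟩
    exact hfix n
  have h1 : (1 : ℝ) ∉ X := fun h1 => h0 (by simpa [Ta] using hXinv h1)
  intro x hx
  exact ⟨lt_of_le_of_ne (hXsub hx).1 fun h => h0 (h ▸ hx),
    lt_of_le_of_ne (hXsub hx).2 fun h => h1 (h ▸ hx)⟩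

/-- Near a point of `X` an iterate of `T_a` is affine with slope `a ^ n`. -/
lemma eventually_iterate_eq (hX : X ⊆ Ioo 0 1) (hXinv : MapsTo (Ta a) X X) (n : ℕ) {x : ℝ}
    (hx : x ∈ X) : ∀ᶠ u in 𝓝 x,
      (Ta a)^[n] u = (a : ℝ) ^ n * u - ⌊(a : ℝ) ^ n * x⌋ := by
  have hT : Int.fract ((a : ℝ) ^ n * x) ∈ Ioo (0 : ℝ) 1 := by
    rw [← Ta_iterate a (Ioo_subset_Ico_self (hX hx))]
    exact hX (iterate_mem hXinv n hx)
  have hc : Tendsto (fun u : ℝ => (a : ℝ) ^ n * u - ⌊(a : ℝ) ^ n * x⌋) (𝓝 x)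
      (𝓝 ((a : ℝ) ^ n * x - ⌊(a : ℝ) ^ n * x⌋)) :=
    Continuous.tendsto (by fun_prop) x
  filter_upwards [hc.eventually (isOpen_Ioo.mem_nhds hT), isOpen_Ioo.mem_nhds (hX hx)] with u hu hu'
  rw [Ta_iterate a (Ioo_subset_Ico_self hu'), Int.fract_eq_iff]
  exact ⟨hu.1.le, hu.2, ⌊(a : ℝ) ^ n * x⌋, by ring⟩

lemma fracPart_mul {s t : ℝ} (hs : s ≠ 0) (ht : t ≠ 0) :
    fracPart a (s * t) = fracPart a s + fracPart a t := by
  rw [fracPart, abs_mul, Real.logb_mul (abs_ne_zero.2 hs) (abs_ne_zero.2 ht), neg_add,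
    AddCircle.coe_add]
  rfl

lemma fracPart_pow (ha : 2 ≤ a) (n : ℕ) : fracPart a ((a : ℝ) ^ n) = 0 := by
  have h : (1 : ℝ) < a := by exact_mod_cast ha
  rw [fracPart, abs_of_nonneg (by positivity), Real.logb_pow, Real.logb_self_eq_one h,
    AddCircle.coe_eq_zero_iff]
  exact ⟨-n, by simp⟩

/-- The set of limits of `{u - v}_a` over distinct `u, v ∈ X` tending to `x`
(the local difference set of `X` at `x`), with the limits spelled out in `ε`-form. -/
def limitDiffs (a : ℕ) (X : Set ℝ) (x : ℝ) : Set (AddCircle (1 : ℝ)) :=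
  {θ | ∀ ε > 0, ∃ u ∈ X, ∃ v ∈ X, u ≠ v ∧ dist u x < ε ∧ dist v x < ε ∧
    dist (fracPart a (u - v)) θ < ε}

lemma isClosed_limitDiffs (x : ℝ) : IsClosed (limitDiffs a X x) := by
  refine isClosed_of_closure_subset fun θ hθ ε hε => ?_
  obtain ⟨θ', hθ', hd⟩ := Metric.mem_closure_iff.1 hθ (ε / 2) (by positivity)
  obtain ⟨u, hu, v, hv, huv, h1, h2, h3⟩ := hθ' (ε / 2) (by positivity)
  refine ⟨u, hu, v, hv, huv, by linarith, by linarith, ?_⟩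
  have := dist_triangle (fracPart a (u - v)) θ' θ
  rw [dist_comm θ' θ] at this
  linarith

/-- By minimality the orbit of `x` visits any neighbourhood of `y`; the iterate `T_a ^ n` scales
small differences by `a ^ n`, which does not change their fractional part. -/
lemma limitDiffs_subset (ha : 2 ≤ a) (hX : X ⊆ Ioo 0 1) (hXinv : MapsTo (Ta a) X X)
    (hXmin : ∀ x ∈ X, IsTransitivePoint a X x) {x y : ℝ} (hx : x ∈ X) (hy : y ∈ X) :
    limitDiffs a X x ⊆ limitDiffs a X y := by
  intro θ hθ ε hε
  have ha0 : (a : ℝ) ≠ 0 := by positivity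
  obtain ⟨_, ⟨n, -, rfl⟩, hn⟩ := Metric.mem_closure_iff.1 (hXmin x hx hy) ε hε
  have hev := eventually_iterate_eq hX hXinv n hx
  have hcont : Tendsto (Ta a)^[n] (𝓝 x) (𝓝 ((Ta a)^[n] x)) := by
    rw [hev.self_of_nhds]
    exact Tendsto.congr' (hev.mono fun u hu => hu.symm) (Continuous.tendsto (by fun_prop) x)
  have hnear : ∀ᶠ u in 𝓝 x, dist ((Ta a)^[n] u) y < ε :=
    hcont.eventually (Metric.isOpen_ball.mem_nhds (by rwa [Metric.mem_ball, dist_comm]))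
  obtain ⟨δ, hδ, hball⟩ := Metric.eventually_nhds_iff.1 (hev.and hnear)
  obtain ⟨u, hu, v, hv, huv, h1, h2, h3⟩ := hθ (min δ ε) (lt_min hδ hε)
  obtain ⟨hu1, hu2⟩ := hball (h1.trans_le (min_le_left _ _))
  obtain ⟨hv1, hv2⟩ := hball (h2.trans_le (min_le_left _ _))
  have hdiff : (Ta a)^[n] u - (Ta a)^[n] v = (a : ℝ) ^ n * (u - v) := by rw [hu1, hv1]; ring
  have huv' : u - v ≠ 0 := sub_ne_zero.2 huv
  refine ⟨_, iterate_mem hXinv n hu, _, iterate_mem hXinv n hv, ?_, hu2, hv2, ?_⟩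
  · rw [← sub_ne_zero, hdiff]
    positivity
  · rw [hdiff, fracPart_mul (by positivity) huv', fracPart_pow ha, zero_add]
    exact h3.trans_le (min_le_right _ _)

lemma limitDiffs_nonempty (hXcpt : IsCompact X) (hXinf : X.Infinite) :
    ∃ x ∈ X, (limitDiffs a X x).Nonempty := by
  obtain ⟨x, hx, hacc⟩ := hXinf.exists_accPt_of_subset_isCompact hXcpt subset_rfl
  have : NeBot (𝓝[≠] x ⊓ 𝓟 X) := hacc
  obtain ⟨θ, hθ⟩ := exists_clusterPt_of_compactSpace
    (map (fun u => fracPart a (u - x)) (𝓝[≠] x ⊓ 𝓟 X))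
  refine ⟨x, hx, θ, fun ε hε => ?_⟩
  have hfr : ∃ᶠ u in 𝓝[≠] x ⊓ 𝓟 X, dist (fracPart a (u - x)) θ < ε :=
    mapClusterPt_iff_frequently.1 hθ _ (Metric.ball_mem_nhds θ hε)
  have hev : ∀ᶠ u in 𝓝[≠] x ⊓ 𝓟 X, u ∈ X ∧ u ≠ x ∧ dist u x < ε :=
    (eventually_inf_principal.2 (Eventually.of_forall fun _ h => h)).and
      ((Eventually.filter_mono inf_le_left
        (eventually_mem_nhdsWithin.and
          (eventually_nhdsWithin_of_eventually_nhds (Metric.ball_mem_nhds x hε)))))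
  obtain ⟨u, h1, h2, h3, h4⟩ := (hfr.and_eventually hev).exists
  exact ⟨u, h2, x, hx, h3, h4, by simpa using hε, h1⟩

/-- A `C¹` map multiplies infinitesimal differences at `x` by `f' x`, so it translates the local
difference set by `{f' x}_a`. -/
lemma add_mem_limitDiffs {f : ℝ → ℝ} (hf1 : ContDiff ℝ 1 f) (hf2 : ∀ x, deriv f x ≠ 0)
    (hinj : Function.Injective f) (himg : f '' X ⊆ X) {x : ℝ} {θ : AddCircle (1 : ℝ)}
    (hθ : θ ∈ limitDiffs a X x) : fracPart a (deriv f x) + θ ∈ limitDiffs a X (f x) := by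
  intro ε hε
  have hstrict : Tendsto (fun p : ℝ × ℝ => (f p.1 - f p.2) / (p.1 - p.2))
      (𝓝 (x, x) ⊓ 𝓟 {p | p.1 ≠ p.2}) (𝓝 (deriv f x)) := by
    have h := (hf1.hasStrictDerivAt one_ne_zero (x := x)).isLittleO
    rw [Metric.tendsto_nhds]
    intro η hη
    rw [eventually_inf_principal]
    filter_upwards [h.def (half_pos hη)] with p hp hne
    have hne' : 0 < |p.1 - p.2| := abs_pos.2 (sub_ne_zero.2 hne)
    have h0 : p.1 - p.2 ≠ 0 := sub_ne_zero.2 hne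
    rw [Real.dist_eq, div_sub' h0, abs_div, div_lt_iff₀ hne']
    simp only [ContinuousLinearMap.toSpanSingleton_apply, smul_eq_mul, Real.norm_eq_abs] at hp
    nlinarith
  have hcont : ContinuousAt (fracPart a) (deriv f x) := by
    unfold fracPart
    refine (AddCircle.continuous_mk' 1).continuousAt.comp (ContinuousAt.neg ?_)
    exact ((Real.continuousAt_log (abs_ne_zero.2 (hf2 x))).comp
      continuous_abs.continuousAt).div_const _
  have hev := (hcont.tendsto.comp hstrict).eventually (Metric.ball_mem_nhds _ (half_pos hε))
  rw [eventually_inf_principal] at hev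
  obtain ⟨δ, hδ, hball⟩ := Metric.eventually_nhds_iff.1 hev
  obtain ⟨δ', hδ', hball'⟩ := Metric.eventually_nhds_iff.1
    (hf1.continuous.continuousAt.eventually (Metric.ball_mem_nhds (f x) hε))
  obtain ⟨u, hu, v, hv, huv, h1, h2, h3⟩ :=
    hθ (min (min δ δ') (ε / 2)) (lt_min (lt_min hδ hδ') (half_pos hε))
  simp only [lt_min_iff] at h1 h2 h3
  have hq := hball (y := (u, v)) (by rw [Prod.dist_eq]; exact max_lt h1.1.1 h2.1.1) huv
  simp only [Function.comp] at hq
  have huv' : u - v ≠ 0 := sub_ne_zero.2 huv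
  have hfuv : f u - f v ≠ 0 := sub_ne_zero.2 fun h => huv (hinj h)
  refine ⟨f u, himg ⟨u, hu, rfl⟩, f v, himg ⟨v, hv, rfl⟩, sub_ne_zero.1 hfuv,
    hball' h1.1.2, hball' h2.1.2, ?_⟩
  have hsplit : fracPart a (f u - f v)
      = fracPart a ((f u - f v) / (u - v)) + fracPart a (u - v) := by
    rw [← fracPart_mul (div_ne_zero hfuv huv') huv', div_mul_cancel₀ _ huv']
  rw [hsplit]
  refine (dist_add_add_le _ _ _ _).trans_lt ?_
  linarith [h3.2]

/-- A closed nonempty subset of the circle that is invariant under an irrational translation is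
the whole circle. -/
lemma eq_univ_of_add_mem {F : Set (AddCircle (1 : ℝ))} (hF : IsClosed F) (hne : F.Nonempty)
    {t : ℝ} (ht : Irrational t) (hadd : ∀ θ ∈ F, (t : AddCircle (1 : ℝ)) + θ ∈ F) : F = univ := by
  obtain ⟨θ, hθ⟩ := hne
  have hd : DenseRange (fun n : ℕ => n • (t : AddCircle (1 : ℝ))) := by
    rw [← denseRange_zsmul_iff_nsmul, AddCircle.denseRange_zsmul_coe_iff]
    simpa using ht
  have hd' := (Homeomorph.addRight θ).surjective.denseRange.comp hd
    (Homeomorph.addRight θ).continuous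
  rw [← hF.closure_eq, ← Dense.closure_eq hd']
  refine Subset.antisymm (by rw [hd'.closure_eq]; exact subset_univ _)
    (closure_mono ?_)
  rintro _ ⟨n, rfl⟩
  induction n with
  | zero => simpa using hθ
  | succ n ih => simpa [succ_nsmul', add_assoc] using hadd _ ih

/-! ### From local differences to differences modulo `1` -/

/-- If every `θ` is a limit of fractional parts of differences of `X`, then magnifying such
differences by powers of `a` shows that every point of the circle is a difference of `X`. -/
lemma exists_sub_eq_of_limitDiffs (ha : 2 ≤ a) (hXcpt : IsCompact X) (hXinv : MapsTo (Ta a) X X)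
    {x : ℝ} (huniv : limitDiffs a X x = univ) (t : AddCircle (1 : ℝ)) :
    ∃ p ∈ X, ∃ q ∈ X, ((q : ℝ) : AddCircle (1 : ℝ)) - p = t := by
  have ha1 : (1 : ℝ) < a := by exact_mod_cast ha
  have ha0 : (0 : ℝ) < a := by positivity
  set Δ : Set (AddCircle (1 : ℝ)) :=
    (fun z : ℝ × ℝ => ((z.2 : ℝ) : AddCircle (1 : ℝ)) - z.1) '' X ×ˢ X with hΔ
  have hcont : Continuous (fun s : ℝ => (s : AddCircle (1 : ℝ))) := AddCircle.continuous_mk' 1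
  have hΔcl : IsClosed Δ :=
    ((hXcpt.prod hXcpt).image ((hcont.comp continuous_snd).sub (hcont.comp continuous_fst))).isClosed
  suffices h : t ∈ Δ by
    obtain ⟨⟨p, q⟩, ⟨hp, hq⟩, h⟩ := h
    exact ⟨p, hp, q, hq, h⟩
  obtain ⟨r, hr, rfl⟩ : ∃ r : ℝ, 0 < r ∧ (r : AddCircle (1 : ℝ)) = t := by
    obtain ⟨s, rfl⟩ := QuotientAddGroup.mk_surjective t
    refine ⟨Int.fract s + 1, by linarith [Int.fract_nonneg s], ?_⟩
    rw [AddCircle.coe_add, coe_fract, AddCircle.coe_period, add_zero]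
  rw [← hΔcl.closure_eq, mem_closure_iff_nhds]
  intro U hU
  -- `s ↦ a ^ s mod 1` is continuous, so it is enough to approximate `logb a r`.
  have hexp : ContinuousAt (fun s : ℝ => (((a : ℝ) ^ s : ℝ) : AddCircle (1 : ℝ)))
      (Real.logb a r) :=
    hcont.continuousAt.comp (Real.continuousAt_const_rpow ha0.ne')
  have hval : (a : ℝ) ^ Real.logb a r = r := Real.rpow_logb ha0 ha1.ne' hr
  obtain ⟨η, hη, hball⟩ := Metric.eventually_nhds_iff.1
    (hexp.tendsto.eventually (by rw [hval]; exact hU))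
  have hθ : fracPart a r ∈ limitDiffs a X x := huniv ▸ mem_univ _
  obtain ⟨u, hu, v, hv, huv, h1, h2, h3⟩ := hθ (min (min η 1) (r / (2 * a)))
    (lt_min (lt_min hη one_pos) (by positivity))
  simp only [lt_min_iff] at h1 h2 h3
  have huv' : 0 < |u - v| := abs_pos.2 (sub_ne_zero.2 huv)
  have hsmall : |u - v| < r / a := by
    have h := dist_triangle_right u v x
    rw [Real.dist_eq] at h
    have h' : r / (2 * a) + r / (2 * a) = r / a := by field_simp; norm_num
    linarith [h1.2, h2.2]
  have hlog : Real.logb a |u - v| < Real.logb a r - 1 := by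
    have h := Real.logb_lt_logb ha1 huv' hsmall
    rwa [Real.logb_div hr.ne' ha0.ne', Real.logb_self_eq_one ha1] at h
  have hnorm := h3.1
  rw [dist_eq_norm, fracPart, fracPart, ← AddCircle.coe_sub, UnitAddCircle.norm_eq,
    abs_of_pos hr] at hnorm
  set k : ℤ := round (-Real.logb a |u - v| - -Real.logb a r) with hk
  have hk0 : 0 ≤ k := by
    have h := (abs_lt.1 hnorm.2).2
    have : (-1 : ℝ) < k := by linarith
    have : (-1 : ℤ) < k := by exact_mod_cast this
    omega
  obtain ⟨m, hm⟩ := Int.eq_ofNat_of_zero_le hk0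
  rw [hm, Int.cast_natCast] at hnorm
  have hw : Real.logb a ((a : ℝ) ^ m * |u - v|) = m + Real.logb a |u - v| := by
    rw [Real.logb_mul (by positivity) huv'.ne', Real.logb_pow, Real.logb_self_eq_one ha1, mul_one]
  have hmem := hball (y := Real.logb a ((a : ℝ) ^ m * |u - v|)) (by
    rw [hw, Real.dist_eq, abs_sub_comm]
    have h : Real.logb a r - (m + Real.logb a |u - v|)
        = -Real.logb a |u - v| - -Real.logb a r - m := by ring
    rw [h]
    exact hnorm.1)
  rw [Real.rpow_logb ha0 ha1.ne' (by positivity)] at hmem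
  refine ⟨_, hmem, ?_⟩
  have hscale : ∀ p q : ℝ, (((a : ℝ) ^ m * (q - p) : ℝ) : AddCircle (1 : ℝ))
      = (((Ta a)^[m] q : ℝ) : AddCircle (1 : ℝ)) - ((Ta a)^[m] p : ℝ) := by
    intro p q
    rw [coe_Ta_iterate, coe_Ta_iterate, ← smul_sub, ← AddCircle.coe_sub, ← AddCircle.coe_nsmul,
      nsmul_eq_mul, Nat.cast_pow]
  rcases abs_choice (u - v) with h | h
  · rw [h, hscale]
    exact ⟨(_, _), ⟨iterate_mem hXinv m hv, iterate_mem hXinv m hu⟩, rfl⟩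
  · rw [h, neg_sub, hscale]
    exact ⟨(_, _), ⟨iterate_mem hXinv m hu, iterate_mem hXinv m hv⟩, rfl⟩

/-! ### Counting words -/

/-- If a `T_a ^ p`-periodic point `t` is a difference of two points of `X`, then along the orbit of
such a pair the difference stays in the orbit of `t`, and by minimality the first point of the
pair can be moved to any `y ∈ X`. -/
lemma exists_add_orbit_mem (hXcpt : IsCompact X) (hXinv : MapsTo (Ta a) X X)
    (hXmin : ∀ x ∈ X, IsTransitivePoint a X x) {p : ℕ} (hp : 0 < p) {t : AddCircle (1 : ℝ)}
    (ht : a ^ p • t = t) (hdiff : ∃ x ∈ X, ∃ x' ∈ X, ((x' : ℝ) : AddCircle (1 : ℝ)) - x = t)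
    {y : ℝ} (hy : y ∈ X) :
    ∃ j < p, ∃ z ∈ X, (z : AddCircle (1 : ℝ)) = y + a ^ j • t := by
  obtain ⟨x, hx, x', hx', hxx'⟩ := hdiff
  have hcont : Continuous (fun s : ℝ => (s : AddCircle (1 : ℝ))) := AddCircle.continuous_mk' 1
  set Y : Set (AddCircle (1 : ℝ)) := (fun s : ℝ => (s : AddCircle (1 : ℝ))) '' X with hY
  have hYcl : IsClosed Y := (hXcpt.image hcont).isClosed
  have hper : ∀ m, a ^ (p * m) • t = t := by
    intro m
    induction m with
    | zero => simp
    | succ m ih => rw [Nat.mul_succ, pow_add, mul_smul, ht, ih]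
  have hRcl : IsClosed
      (⋃ j ∈ Finset.range p, {s : ℝ | (s : AddCircle (1 : ℝ)) + a ^ j • t ∈ Y}) :=
    isClosed_biUnion_finset fun j _ => hYcl.preimage (hcont.add continuous_const)
  have hsub := (hXmin x hx).trans (closure_minimal ?_ hRcl)
  · have h := hsub hy
    simp only [mem_iUnion, Finset.mem_range, mem_ofPred_eq] at h
    obtain ⟨j, hj, z, hz, hzy⟩ := h
    exact ⟨j, hj, z, hz, hzy⟩
  · rintro _ ⟨n, -, rfl⟩
    simp only [mem_iUnion, Finset.mem_range, mem_ofPred_eq]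
    refine ⟨n % p, Nat.mod_lt _ hp, (Ta a)^[n] x', iterate_mem hXinv n hx', ?_⟩
    have hn : a ^ n • t = a ^ (n % p) • t := by
      conv_lhs => rw [← Nat.mod_add_div n p, pow_add, mul_smul, hper]
    simp only [coe_Ta_iterate]
    rw [← hn, ← hxx', smul_sub]
    abel

/-- The base-`a` words of length `n` that begin expansions of points of `X`, each word encoded as
the integer `⌊a ^ n * x⌋`. -/
def words (a : ℕ) (X : Set ℝ) (n : ℕ) : Set ℤ := (fun x : ℝ => ⌊(a : ℝ) ^ n * x⌋) '' X

lemma words_subset (ha : 2 ≤ a) (hX : X ⊆ Ioo 0 1) (n : ℕ) :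
    words a X n ⊆ (Finset.Ico (0 : ℤ) ((a : ℤ) ^ n) : Finset ℤ) := by
  rintro _ ⟨x, hx, rfl⟩
  have hpos : (0 : ℝ) < (a : ℝ) ^ n := by positivity
  simp only [Finset.coe_Ico, mem_Ico]
  refine ⟨Int.floor_nonneg.2 (mul_nonneg hpos.le (hX hx).1.le), Int.floor_lt.2 ?_⟩
  push_cast
  nlinarith [(hX hx).2]

lemma words_finite (ha : 2 ≤ a) (hX : X ⊆ Ioo 0 1) (n : ℕ) : (words a X n).Finite :=
  (Finset.finite_toSet _).subset (words_subset ha hX n)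

/-- The number of words is submultiplicative: a word of length `n + m` is one of length `n`
followed by a word of length `m` occurring in the orbit. -/
lemma ncard_words_add_le (ha : 2 ≤ a) (hX : X ⊆ Ioo 0 1) (hXinv : MapsTo (Ta a) X X) (n m : ℕ) :
    (words a X (n + m)).ncard ≤ (words a X n).ncard * (words a X m).ncard := by
  have hsub : words a X (n + m) ⊆
      (fun z : ℤ × ℤ => (a : ℤ) ^ m * z.1 + z.2) '' words a X n ×ˢ words a X m := by
    rintro _ ⟨x, hx, rfl⟩
    refine ⟨(⌊(a : ℝ) ^ n * x⌋, ⌊(a : ℝ) ^ m * (Ta a)^[n] x⌋),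
      ⟨⟨x, hx, rfl⟩, ⟨_, iterate_mem hXinv n hx, rfl⟩⟩, ?_⟩
    simp only
    rw [Ta_iterate a (Ioo_subset_Ico_self (hX hx)), ← Int.floor_intCast_add, Int.fract]
    congr 1
    push_cast
    ring
  have hfin := (words_finite ha hX n).prod (words_finite ha hX m)
  calc _ ≤ _ := ncard_le_ncard hsub (hfin.image _)
    _ ≤ _ := ncard_image_le hfin
    _ = _ := ncard_prod

/-- As `X` is at positive distance from `0`, some word `0 ⋯ 0` does not occur. -/
lemma exists_ncard_words_lt (ha : 2 ≤ a) (hXcl : IsClosed X) (hX : X ⊆ Ioo 0 1) :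
    ∃ m, 0 < m ∧ (words a X m).ncard ≤ a ^ m - 1 := by
  have ha1 : (1 : ℝ) < a := by exact_mod_cast ha
  have h0 : Xᶜ ∈ 𝓝 (0 : ℝ) := hXcl.isOpen_compl.mem_nhds fun h => lt_irrefl _ (hX h).1
  obtain ⟨δ, hδ, hball⟩ := Metric.mem_nhds_iff.1 h0
  obtain ⟨m, hm⟩ := pow_unbounded_of_one_lt (1 / δ) ha1
  have hm' : 1 / δ < (a : ℝ) ^ (m + 1) := hm.trans (pow_lt_pow_right₀ ha1 (Nat.lt_succ_self m))
  refine ⟨m + 1, Nat.succ_pos m, ?_⟩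
  have hsub : words a X (m + 1) ⊆ (Finset.Ico (1 : ℤ) ((a : ℤ) ^ (m + 1)) : Finset ℤ) := by
    intro w hw
    have h := words_subset ha hX _ hw
    obtain ⟨x, hx, rfl⟩ := hw
    simp only [Finset.coe_Ico, mem_Ico] at h ⊢
    refine ⟨Int.le_floor.2 ?_, h.2⟩
    have hx' : δ ≤ x := by
      by_contra! hlt
      refine hball ?_ hx
      rw [Metric.mem_ball, Real.dist_eq, sub_zero, abs_of_pos (hX hx).1]
      exact hlt
    have := (div_lt_iff₀ hδ).1 hm'
    push_cast
    nlinarith [pow_pos (zero_lt_one.trans ha1) (m + 1)]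
  refine (ncard_le_ncard hsub (Finset.finite_toSet _)).trans ?_
  rw [ncard_coe_finset, Int.card_Ico]
  have : 1 ≤ a ^ (m + 1) := Nat.one_le_pow _ _ (by omega)
  zify [this]
  rw [Int.toNat_of_nonneg]
  have : (1 : ℤ) ≤ (a : ℤ) ^ (m + 1) := by exact_mod_cast this
  omega

/-- If the differences of `X` fill the circle, then `X` has nearly the maximal number of words:
fix `y ∈ X`; each of the `a ^ p - 1` points `t = k / (a ^ p - 1)` gives a point `y + a ^ j t`
of `X` with `j < p`, and `t` can be recovered from `j` and the word of length `p` of that point. -/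
lemma le_mul_ncard_words (ha : 2 ≤ a) (hXcpt : IsCompact X) (hX : X ⊆ Ioo 0 1)
    (hXne : X.Nonempty) (hXinv : MapsTo (Ta a) X X)
    (hXmin : ∀ x ∈ X, IsTransitivePoint a X x)
    (hdiff : ∀ t : AddCircle (1 : ℝ), ∃ x ∈ X, ∃ x' ∈ X, ((x' : ℝ) : AddCircle (1 : ℝ)) - x = t)
    {p : ℕ} (hp : 0 < p) : a ^ p - 1 ≤ p * (words a X p).ncard := by
  obtain ⟨y, hy⟩ := hXne
  have hap : 1 < a ^ p := Nat.one_lt_pow hp.ne' (by omega)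
  have hapR : (1 : ℝ) < (a : ℝ) ^ p := by exact_mod_cast hap
  set N : ℝ := (a : ℝ) ^ p - 1 with hN
  have hN0 : 0 < N := by linarith
  have hper : ∀ k : ℕ, a ^ p • ((k / N : ℝ) : AddCircle (1 : ℝ)) = ((k / N : ℝ) : _) := by
    intro k
    rw [← sub_eq_zero, ← AddCircle.coe_nsmul, ← AddCircle.coe_sub, AddCircle.coe_eq_zero_iff]
    refine ⟨k, ?_⟩
    rw [nsmul_eq_mul, Nat.cast_pow, zsmul_one, Int.cast_natCast]
    field_simp
    rw [hN]
  choose j hj z hz hzy using fun k : ℕ =>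
    exists_add_orbit_mem hXcpt hXinv hXmin hp (hper k) (hdiff _) hy
  have hfin : ((Finset.range p : Set ℕ) ×ˢ words a X p).Finite :=
    (Finset.finite_toSet _).prod (words_finite ha hX p)
  have hle := ncard_le_ncard_of_injOn (s := (Finset.range (a ^ p - 1) : Set ℕ))
    (t := (Finset.range p : Set ℕ) ×ˢ words a X p)
    (fun k => (j k, ⌊(a : ℝ) ^ p * z k⌋))
    (fun k _ => ⟨Finset.mem_coe.2 (Finset.mem_range.2 (hj k)), z k, hz k, rfl⟩) ?_ hfin
  · rwa [ncard_prod, ncard_coe_finset, ncard_coe_finset, Finset.card_range,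
      Finset.card_range] at hle
  intro k hk l hl hkl
  simp only [Finset.coe_range, mem_Iio] at hk hl
  obtain ⟨hjkl, hfl⟩ := Prod.mk.inj hkl
  have hzz : ((z k - z l - ((a : ℝ) ^ j k * (k / N) - (a : ℝ) ^ j k * (l / N)) : ℝ) :
      AddCircle (1 : ℝ)) = 0 := by
    have hpush : ∀ i : ℕ, (((a : ℝ) ^ j k * (i / N) : ℝ) : AddCircle (1 : ℝ))
        = a ^ j k • ((i / N : ℝ) : AddCircle (1 : ℝ)) := by
      intro i
      rw [← AddCircle.coe_nsmul, nsmul_eq_mul, Nat.cast_pow]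
    simp only [AddCircle.coe_sub, hpush]
    rw [hzy k, hzy l, ← hjkl]
    abel
  obtain ⟨c, hc⟩ := AddCircle.coe_eq_zero_iff (1 : ℝ) |>.1 hzz
  rw [zsmul_one] at hc
  -- The two points differ by an integer multiple of `1 / N`, and share a word of length `p`, so
  -- their distance is `< a ^ (-p) < 1 / N` and that integer vanishes.
  have hint : N * (z k - z l)
      = (((a : ℤ) ^ j k * (k - l) + c * ((a : ℤ) ^ p - 1) : ℤ) : ℝ) := by
    have h : z k - z l = c + ((a : ℝ) ^ j k * (k / N) - (a : ℝ) ^ j k * (l / N)) := by linarith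
    rw [h]
    push_cast
    rw [← hN]
    field_simp
    ring
  have habs := Int.abs_sub_lt_one_of_floor_eq_floor hfl
  rw [← mul_sub, abs_mul, abs_of_pos (by linarith)] at habs
  have hlt : |N * (z k - z l)| < 1 := by
    rw [abs_mul, abs_of_pos hN0]
    nlinarith [abs_nonneg (z k - z l)]
  rw [hint, ← Int.cast_abs] at hlt
  have hzero : (a : ℤ) ^ j k * (k - l) + c * ((a : ℤ) ^ p - 1) = 0 :=
    Int.abs_lt_one_iff.1 (by exact_mod_cast hlt)
  have hcop : IsCoprime ((a : ℤ) ^ p - 1) ((a : ℤ) ^ j k) := by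
    refine ⟨-1, (a : ℤ) ^ (p - j k), ?_⟩
    rw [← pow_add, Nat.sub_add_cancel (hj k).le]
    ring
  have hdvd : (a : ℤ) ^ p - 1 ∣ (k : ℤ) - l :=
    hcop.dvd_of_dvd_mul_left ⟨-c, by linarith⟩
  have hcast : ((a ^ p - 1 : ℕ) : ℤ) = (a : ℤ) ^ p - 1 := by
    rw [Nat.cast_sub hap.le]
    push_cast
    rfl
  have := Int.eq_zero_of_abs_lt_dvd hdvd (by rw [abs_lt]; omega)
  omega

/-- The differences of an infinite minimal set do not fill the circle: otherwise the number of
words would grow like `a ^ p / p`, while a forbidden word forces a smaller exponential rate. -/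
lemma not_forall_exists_sub_eq (ha : 2 ≤ a) (hXcpt : IsCompact X) (hX : X ⊆ Ioo 0 1)
    (hXne : X.Nonempty) (hXinv : MapsTo (Ta a) X X)
    (hXmin : ∀ x ∈ X, IsTransitivePoint a X x) :
    ¬ ∀ t : AddCircle (1 : ℝ), ∃ x ∈ X, ∃ x' ∈ X, ((x' : ℝ) : AddCircle (1 : ℝ)) - x = t := by
  intro hdiff
  obtain ⟨m, hm, hcard⟩ := exists_ncard_words_lt ha hXcpt.isClosed hX
  set b : ℕ := a ^ m with hb
  have hb1 : 1 < b := Nat.one_lt_pow hm.ne' (by omega)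
  have hpow : ∀ n, (words a X (m * (n + 1))).ncard ≤ (b - 1) ^ (n + 1) := by
    intro n
    induction n with
    | zero => simpa using hcard
    | succ n ih =>
      rw [Nat.mul_succ m (n + 1), pow_succ (b - 1) (n + 1)]
      exact (ncard_words_add_le ha hX hXinv _ _).trans (Nat.mul_le_mul ih hcard)
  have hb0 : (0 : ℝ) < b := by positivity
  have hbR : (1 : ℝ) < b := by exact_mod_cast hb1
  set r : ℝ := ((b : ℝ) - 1) / b with hr
  have hr0 : 0 ≤ r := div_nonneg (by linarith) hb0.le
  have hr1 : r < 1 := by rw [hr, div_lt_one hb0]; linarith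
  have hineq : ∀ n : ℕ, 1 ≤ (b : ℝ)⁻¹ ^ (n + 1) + m * (((n + 1 : ℕ) : ℝ) * r ^ (n + 1)) := by
    intro n
    have h := (le_mul_ncard_words ha hXcpt hX hXne hXinv hXmin hdiff
      (p := m * (n + 1)) (by positivity)).trans (Nat.mul_le_mul_left _ (hpow n))
    rw [pow_mul, ← hb, tsub_le_iff_right] at h
    have h' : (b : ℝ) ^ (n + 1) ≤ m * ((n + 1 : ℕ) : ℝ) * ((b : ℝ) - 1) ^ (n + 1) + 1 := by
      have := (Nat.cast_le (α := ℝ)).2 h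
      push_cast [Nat.cast_sub hb1.le] at this ⊢
      exact this
    rw [hr, div_pow, inv_pow]
    have hbn : (0 : ℝ) < (b : ℝ) ^ (n + 1) := by positivity
    have := div_le_div_of_nonneg_right h' hbn.le
    rw [div_self hbn.ne'] at this
    calc (1 : ℝ) ≤ _ := this
      _ = _ := by field_simp; ring
  have hlim : Tendsto (fun n : ℕ => (b : ℝ)⁻¹ ^ (n + 1) + m * (((n + 1 : ℕ) : ℝ) * r ^ (n + 1)))
      atTop (𝓝 (0 + m * 0)) := by
    refine Tendsto.add ?_ (Tendsto.const_mul _ ?_)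
    · exact (tendsto_add_atTop_iff_nat 1).2
        (tendsto_pow_atTop_nhds_zero_of_lt_one (by positivity) (inv_lt_one_of_one_lt₀ hbR))
    · exact (tendsto_add_atTop_iff_nat (f := fun n : ℕ => (n : ℝ) * r ^ n) 1).2
        (tendsto_self_mul_const_pow_of_lt_one hr0 hr1)
  have := ge_of_tendsto' hlim hineq
  norm_num at this

end dynamics

/-- **Theorem 1.2(2), first part.** If `X ⊆ [0,1]` is an infinite closed minimal
`T_a`-invariant set and `f : ℝ → ℝ` is a `C¹` embedding with `f(X) ⊆ X`, then
`log_a |f'(x)| ∈ ℚ` for every `x ∈ X`. -/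
theorem C1_embedding_minimal_commensurable
    (a : ℕ) (ha : 2 ≤ a) (X : Set ℝ) (hXsub : X ⊆ Set.Icc 0 1)
    (hXcl : IsClosed X) (hXinf : X.Infinite)
    (hXinv : Set.MapsTo (Ta a) X X)
    (hXmin : ∀ x ∈ X, IsTransitivePoint a X x)
    (f : ℝ → ℝ) (hf1 : ContDiff ℝ 1 f) (hf2 : ∀ x, deriv f x ≠ 0)
    (hf3 : Topology.IsEmbedding f)
    (himg : f '' X ⊆ X) :
    ∀ x ∈ X, ∃ q : ℚ, Real.logb a |deriv f x| = q := by
  intro x hx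
  have hXcpt : IsCompact X := isCompact_Icc.of_isClosed_subset hXcl hXsub
  have hX : X ⊆ Ioo 0 1 := subset_Ioo hXsub hXinf hXinv hXmin
  have hfx : f x ∈ X := himg ⟨x, hx, rfl⟩
  by_contra hirr
  have ht : Irrational (-Real.logb a |deriv f x|) := by
    refine Irrational.neg ?_
    rintro ⟨q, hq⟩
    exact hirr ⟨q, hq.symm⟩
  obtain ⟨x₀, hx₀, hne⟩ := limitDiffs_nonempty (a := a) hXcpt hXinf
  have huniv : limitDiffs a X x = univ :=
    eq_univ_of_add_mem (isClosed_limitDiffs x)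
      (hne.mono (limitDiffs_subset ha hX hXinv hXmin hx₀ hx)) ht fun θ hθ =>
        limitDiffs_subset ha hX hXinv hXmin hfx hx
          (add_mem_limitDiffs hf1 hf2 hf3.injective himg hθ)
  exact not_forall_exists_sub_eq ha hXcpt hX hXinf.nonempty hXinv hXmin
    (exists_sub_eq_of_limitDiffs ha hXcpt hXinv huniv)
end

section
/- Let a ≥ 2 be an integer and let X ⊆ [0,1] be a closed, perfect, transitive, non-trivial and self-restricted T_a-invariant set. If f : ℝ → ℝ is a C¹ local diffeomorphism (f is C¹ with nowhere vanishing derivative) and f(X) = X, then the set {x ∈ X : log_a|f'(x)| ∈ ℚ} contains a dense relatively open subset of X. -/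
/-!
Write `{s} = -log_a |s| mod 1` and let `F x ⊆ ℝ/ℤ` be the set of limits of `{u - v}` along pairs of
distinct points `u, v ∈ X` tending to `x`.

* `F x` is closed, non-empty (`X` is perfect), and upper semicontinuous in `x`.
* `F x ⊆ F (T_a x)` whenever `a x ∉ ℤ`, since `T_a` is locally affine of slope `a` near `x`. An orbit
  that is dense in the infinite set `X` never meets a point with `a x ∈ ℤ`, so by semicontinuity
  `F z ⊆ F y` for every transitive `z` and every `y ∈ X`: transitive points share one minimal
  set `F₀`. As `X` is perfect, every `T_a^n x₀` is transitive when `x₀` is.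
* `F x + {f'(x)} ⊆ F (f x)`, since `f` is `C¹`.
* No `F x` is the whole circle. Indeed `D = X - X mod 1` is closed, stable under multiplication by
  `a`, and misses some `s ∈ (0,1)`. Were `{s}` in `F x`, some differences `u - v` rescaled by powers
  of `a` would converge to `s`, and so `s ∈ D`.

A derivative without zeros has constant sign, so `f` is injective and restricts to a homeomorphism
of the compact set `X`. Hence the points `y ∈ X` with `f y` in the orbit of `x₀` are dense in `X`.
For such `y`, `F₀ + {f'(y)} ⊆ F y + {f'(y)} ⊆ F (f y) = F₀`, and by continuity
`F₀ + {f'(y)} ⊆ F₀` for all `y ∈ X`. If `log_a |f'(y)|` were irrational, the multiples of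
`{f'(y)}` would be dense, making the closed non-empty set `F₀` the whole circle. So `log_a |f'|` is
rational on all of `X`, and the open set can be taken to be `ℝ`.
-/


open Filter Topology Set MeasureTheory ENNReal

namespace LocalDiff

/-! ### The fractional part -/

lemma fracPart_mul {a : ℕ} {s t : ℝ} (hs : s ≠ 0) (ht : t ≠ 0) :
    fracPart a (s * t) = fracPart a s + fracPart a t := by
  unfold fracPart
  rw [abs_mul, Real.logb_mul (abs_ne_zero.2 hs) (abs_ne_zero.2 ht), neg_add]
  rfl

lemma fracPart_base_mul {a : ℕ} (ha : 2 ≤ a) {t : ℝ} (ht : t ≠ 0) :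
    fracPart a (a * t) = fracPart a t := by
  have ha1 : (1 : ℝ) < a := by exact_mod_cast ha
  rw [fracPart_mul (by positivity) ht, add_eq_right]
  unfold fracPart
  rw [Nat.abs_cast, Real.logb_self_eq_one ha1, AddCircle.coe_eq_zero_iff]
  exact ⟨-1, by simp⟩

lemma continuousAt_fracPart {a : ℕ} {s : ℝ} (hs : s ≠ 0) : ContinuousAt (fracPart a) s := by
  have h : ContinuousAt (fun s : ℝ => -(Real.log |s| / Real.log a)) s :=
    (((Real.continuousAt_log (abs_ne_zero.2 hs)).comp' continuous_abs.continuousAt).div_const _).neg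
  exact (AddCircle.continuous_mk' (1 : ℝ)).continuousAt.comp h

/-! ### Local difference sets -/

/-- The filter of pairs of distinct points of `X` tending to `x`. -/
def pairs (X : Set ℝ) (x : ℝ) : Filter (ℝ × ℝ) :=
  𝓝 (x, x) ⊓ 𝓟 {p | p.1 ∈ X ∧ p.2 ∈ X ∧ p.1 ≠ p.2}

/-- The local difference set of `X` at `x`, as the set of cluster points of `{u - v}` along
`pairs X x`. Cluster points of the filter (rather than limits of sequences) make closedness and
non-emptiness immediate. -/
def F (a : ℕ) (X : Set ℝ) (x : ℝ) : Set (AddCircle (1:ℝ)) :=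
  {t | MapClusterPt t (pairs X x) (fun p => fracPart a (p.1 - p.2))}

lemma isClosed_F (a : ℕ) (X : Set ℝ) (x : ℝ) : IsClosed (F a X x) :=
  isClosed_setOfPred_clusterPt

lemma pairs_neBot {X : Set ℝ} {x : ℝ} (hx : x ∈ X) (h : x ∈ closure (X \ {x})) :
    (pairs X x).NeBot := by
  rw [mem_closure_iff_nhdsWithin_neBot] at h
  have : Tendsto (fun u : ℝ => (u, x)) (𝓝[X \ {x}] x) (pairs X x) := by
    refine tendsto_inf.2 ⟨?_, tendsto_principal.2 ?_⟩
    · exact (Continuous.prodMk_left x).continuousAt.mono_left nhdsWithin_le_nhds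
    · filter_upwards [self_mem_nhdsWithin] with u hu
      exact ⟨hu.1, hx, hu.2⟩
  exact this.neBot

lemma F_nonempty (a : ℕ) {X : Set ℝ} {x : ℝ} (hx : x ∈ X) (h : x ∈ closure (X \ {x})) :
    (F a X x).Nonempty := by
  have := pairs_neBot hx h
  obtain ⟨t, -, ht⟩ := (isCompact_univ (X := AddCircle (1:ℝ))).exists_mapClusterPt
    (f := pairs X x) (u := fun p => fracPart a (p.1 - p.2)) (by simp)
  exact ⟨t, ht⟩

/-- Upper semicontinuity of `F`. -/
lemma F_usc {a : ℕ} {X : Set ℝ} {A : Set (AddCircle (1:ℝ))} {S : Set ℝ} {x : ℝ}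
    (hx : x ∈ closure S) (hS : ∀ y ∈ S, A ⊆ F a X y) : A ⊆ F a X x := by
  intro t ht
  refine mapClusterPt_iff_frequently.2 fun O hO => ?_
  rw [pairs, frequently_inf_principal]
  intro hev
  have h2 : ∀ᶠ y in 𝓝 x, ∀ᶠ p in 𝓝 (y, y), ¬ (p ∈ {p : ℝ × ℝ | p.1 ∈ X ∧ p.2 ∈ X ∧ p.1 ≠ p.2} ∧
      fracPart a (p.1 - p.2) ∈ O) :=
    (continuous_id.prodMk continuous_id).continuousAt.eventually
      (eventually_eventually_nhds.2 hev)
  obtain ⟨y, hy, hyS⟩ := (mem_closure_iff_frequently.1 hx).and_eventually h2 |>.exists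
  have := mapClusterPt_iff_frequently.1 (hS y hy ht) O hO
  rw [pairs, frequently_inf_principal] at this
  exact this hyS

lemma tendsto_pairs {X : Set ℝ} {x : ℝ} {h : ℝ → ℝ} (hc : ContinuousAt h x) (hX : MapsTo h X X)
    (hinj : ∀ᶠ p in pairs X x, h p.1 ≠ h p.2) :
    Tendsto (fun p : ℝ × ℝ => (h p.1, h p.2)) (pairs X x) (pairs X (h x)) := by
  refine tendsto_inf.2 ⟨?_, tendsto_principal.2 ?_⟩
  · have : ContinuousAt (fun p : ℝ × ℝ => (h p.1, h p.2)) (x, x) := by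
      refine ContinuousAt.prodMk ?_ ?_
      · exact ContinuousAt.comp (f := Prod.fst) (x := (x, x)) hc continuousAt_fst
      · exact ContinuousAt.comp (f := Prod.snd) (x := (x, x)) hc continuousAt_snd
    exact this.tendsto.mono_left inf_le_left
  · filter_upwards [hinj, (eventually_principal.2 fun _ h => h : ∀ᶠ p in 𝓟 _, p ∈ _).filter_mono
      (inf_le_right : pairs X x ≤ _)] with p hp hpX
    exact ⟨hX hpX.1, hX hpX.2.1, hp⟩

lemma eventually_pairs (X : Set ℝ) (x : ℝ) :
    ∀ᶠ p in pairs X x, p.1 ∈ X ∧ p.2 ∈ X ∧ p.1 ≠ p.2 :=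
  mem_inf_of_right (mem_principal_self _)

/-- `F` is translated by the logarithmic derivative. It suffices that `h` be strictly
differentiable, so the lemma covers both `f` and the branches of `T_a`. -/
lemma F_add_subset {a : ℕ} {X : Set ℝ} {x h' : ℝ} {h : ℝ → ℝ} (hd : HasStrictDerivAt h h' x)
    (h0 : h' ≠ 0) (hX : MapsTo h X X) {t : AddCircle (1:ℝ)} (ht : t ∈ F a X x) :
    t + fracPart a h' ∈ F a X (h x) := by
  have hslope : Tendsto (fun p : ℝ × ℝ => (h p.1 - h p.2) / (p.1 - p.2)) (pairs X x) (𝓝 h') := by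
    have h1 := (hd.isLittleO.mono (inf_le_left : pairs X x ≤ _)).tendsto_div_nhds_zero
    have h2 := h1.add_const h'
    rw [zero_add] at h2
    refine h2.congr' ?_
    filter_upwards [eventually_pairs X x] with p hp
    have : p.1 - p.2 ≠ 0 := sub_ne_zero.2 hp.2.2
    simp
    field_simp
    ring
  have hne : ∀ᶠ p in pairs X x, h p.1 ≠ h p.2 := by
    filter_upwards [hslope.eventually_ne h0] with p hp he
    simp [he] at hp
  refine MapClusterPt.of_comp (tendsto_pairs hd.hasDerivAt.continuousAt hX hne) ?_
  obtain ⟨U, hU, hUt⟩ := mapClusterPt_iff_ultrafilter.1 ht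
  refine mapClusterPt_iff_ultrafilter.2 ⟨U, hU, ?_⟩
  refine (hUt.add (((continuousAt_fracPart h0).tendsto.comp hslope).mono_left hU)).congr' ?_
  filter_upwards [hU (eventually_pairs X x), hU hne] with p hp hp2
  have e1 : p.1 - p.2 ≠ 0 := sub_ne_zero.2 hp.2.2
  have e2 : h p.1 - h p.2 ≠ 0 := sub_ne_zero.2 hp2
  simp only [Function.comp]
  rw [← fracPart_mul e1 (div_ne_zero e2 e1), mul_div_cancel₀ _ e1]

/-! ### Transitive points -/

lemma F_subset_Ta {a : ℕ} (ha : 2 ≤ a) {X : Set ℝ} (hX : MapsTo (Ta a) X X) {x : ℝ}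
    (hx : ∀ k : ℤ, (a : ℝ) * x ≠ k) : F a X x ⊆ F a X (Ta a x) := by
  intro t ht
  have ha0 : (a : ℝ) ≠ 0 := by positivity
  have hd : HasStrictDerivAt (Ta a) a x := by
    have h1 : HasStrictDerivAt (fun y : ℝ => (a : ℝ) * y - ⌊(a : ℝ) * x⌋) a x := by
      have := ((hasStrictDerivAt_id x).const_mul (a : ℝ)).sub_const (⌊(a : ℝ) * x⌋ : ℝ)
      rwa [mul_one] at this
    refine h1.congr_of_eventuallyEq ?_
    have h2 : ∀ᶠ y in 𝓝 x, (a : ℝ) * y ∈ Ioo (⌊(a : ℝ) * x⌋ : ℝ) (⌊(a : ℝ) * x⌋ + 1) := by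
      refine (continuous_const.mul continuous_id).continuousAt.eventually
        (isOpen_Ioo.mem_nhds ⟨?_, Int.lt_floor_add_one _⟩)
      exact lt_of_le_of_ne (Int.floor_le _) (hx _).symm
    filter_upwards [h2] with y hy
    have : ⌊(a : ℝ) * y⌋ = ⌊(a : ℝ) * x⌋ := Int.floor_eq_iff.2 ⟨hy.1.le, hy.2⟩
    rw [Ta, Int.fract, this]
  have h := F_add_subset hd ha0 hX ht
  have h0 : fracPart a (a : ℝ) = 0 := by
    have := fracPart_base_mul ha (one_ne_zero : (1 : ℝ) ≠ 0)
    rw [mul_one] at this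
    rw [this]
    simp [fracPart]
  rwa [h0, add_zero] at h

lemma Ta_zero (a : ℕ) : Ta a 0 = 0 := by simp [Ta]

/-- Otherwise the orbit reaches `0` and is finite. -/
lemma transitive_ne_int {a : ℕ} {X : Set ℝ} (hinf : X.Infinite) {z : ℝ}
    (hz : IsTransitivePoint a X z) (n : ℕ) (k : ℤ) : (a : ℝ) * (Ta a)^[n] z ≠ k := by
  intro h
  have h0 : ∀ m, (Ta a)^[n + 1 + m] z = 0 := by
    intro m
    rw [add_comm, Function.iterate_add_apply, Function.iterate_succ_apply', Ta, h, Int.fract_intCast]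
    exact Function.iterate_fixed (Ta_zero a) m
  have hfin : {y | ∃ n : ℕ, 1 ≤ n ∧ (Ta a)^[n] z = y}.Finite := by
    refine (((finite_Iio (n + 1)).image fun m => (Ta a)^[m] z).union (finite_singleton 0)).subset ?_
    rintro _ ⟨m, -, rfl⟩
    rcases lt_or_ge m (n + 1) with hm | hm
    · exact Or.inl ⟨m, hm, rfl⟩
    · obtain ⟨j, rfl⟩ := Nat.exists_eq_add_of_le hm
      exact Or.inr (h0 j)
  exact hinf (hfin.subset (hz.trans hfin.isClosed.closure_eq.subset))

lemma transitive_iterate {a : ℕ} {X : Set ℝ} (hperf : ∀ x ∈ X, x ∈ closure (X \ {x})) {z : ℝ}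
    (hz : IsTransitivePoint a X z) (m : ℕ) : IsTransitivePoint a X ((Ta a)^[m] z) := by
  intro x hx
  set E : Set ℝ := (fun j => (Ta a)^[j] z) '' Iio (m + 1)
  have hE : E.Finite := (finite_Iio _).image _
  refine mem_closure_iff.2 fun O hO hxO => ?_
  have hE' : IsOpen (E \ {x})ᶜ := (hE.subset sdiff_subset).isClosed.isOpen_compl
  -- `X` has a point of `O` outside the finite set `E`, so the orbit enters the open set `O \ E`.
  obtain ⟨y, ⟨hyO, hyE⟩, hyX, hyx⟩ := mem_closure_iff.1 (hperf x hx) _ (hO.inter hE')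
    ⟨hxO, fun h => h.2 rfl⟩
  have hyE' : y ∉ E := fun h => hyE ⟨h, hyx⟩
  obtain ⟨w, ⟨hwO, hwE⟩, j, hj, rfl⟩ := mem_closure_iff.1 (hz hyX) _
    (hO.inter hE.isClosed.isOpen_compl) ⟨hyO, hyE'⟩
  have hj2 : m + 1 ≤ j := not_lt.1 fun h => hwE ⟨j, h, rfl⟩
  refine ⟨_, hwO, j - m, by omega, ?_⟩
  rw [← Function.iterate_add_apply]
  congr 2
  omega

lemma F_transitive_subset {a : ℕ} (ha : 2 ≤ a) {X : Set ℝ} (hX : MapsTo (Ta a) X X)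
    (hinf : X.Infinite) {z : ℝ} (hz : IsTransitivePoint a X z) {y : ℝ} (hy : y ∈ X) :
    F a X z ⊆ F a X y := by
  have key : ∀ n, F a X z ⊆ F a X ((Ta a)^[n] z) := by
    intro n
    induction n with
    | zero => exact subset_rfl
    | succ n ih =>
      rw [Function.iterate_succ_apply']
      exact ih.trans (F_subset_Ta ha hX (transitive_ne_int hinf hz n))
  refine F_usc (hz hy) ?_
  rintro _ ⟨n, -, rfl⟩
  exact key n

/-! ### Self-restricted sets -/

/-- `X - X mod 1`. -/
def diffSet (X : Set ℝ) : Set (AddCircle (1:ℝ)) :=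
  {t | ∃ x ∈ X, ∃ y ∈ X, ((x - y : ℝ) : AddCircle (1:ℝ)) = t}

lemma isClosed_diffSet {X : Set ℝ} (hX : IsCompact X) : IsClosed (diffSet X) := by
  have : diffSet X = (fun p : ℝ × ℝ => ((p.1 - p.2 : ℝ) : AddCircle (1:ℝ))) '' (X ×ˢ X) := by
    ext t
    constructor
    · rintro ⟨x, hx, y, hy, h⟩
      exact ⟨(x, y), ⟨hx, hy⟩, h⟩
    · rintro ⟨p, hp, h⟩
      exact ⟨p.1, hp.1, p.2, hp.2, h⟩
  rw [this]
  exact ((hX.prod hX).image ((AddCircle.continuous_mk' (1 : ℝ)).comp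
    (continuous_fst.sub continuous_snd))).isClosed

lemma coe_fract (z : ℝ) : ((Int.fract z : ℝ) : AddCircle (1:ℝ)) = z := by
  rw [← sub_eq_zero, ← AddCircle.coe_sub, AddCircle.coe_eq_zero_iff]
  exact ⟨-⌊z⌋, by rw [Int.fract]; simp⟩

lemma nsmul_mem_diffSet {a : ℕ} {X : Set ℝ} (hX : MapsTo (Ta a) X X) {t : AddCircle (1:ℝ)}
    (ht : t ∈ diffSet X) : a • t ∈ diffSet X := by
  obtain ⟨x, hx, y, hy, rfl⟩ := ht
  refine ⟨_, hX hx, _, hX hy, ?_⟩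
  rw [Ta, Ta, AddCircle.coe_sub, coe_fract, coe_fract, ← AddCircle.coe_sub, ← AddCircle.coe_nsmul]
  congr 1
  simp [mul_sub]

lemma pow_mul_mem_diffSet {a : ℕ} {X : Set ℝ} (hX : MapsTo (Ta a) X X) {d : ℝ}
    (hd : (d : AddCircle (1:ℝ)) ∈ diffSet X) (n : ℕ) :
    (((a : ℝ) ^ n * d : ℝ) : AddCircle (1:ℝ)) ∈ diffSet X := by
  induction n with
  | zero => simpa using hd
  | succ n ih =>
    have := nsmul_mem_diffSet hX ih
    rw [← AddCircle.coe_nsmul] at this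
    convert this using 2
    simp [pow_succ]
    ring

/-- If `{s}` is a local difference, then differences of points of `X` rescaled by powers of `a`
accumulate at `s`. -/
lemma coe_mem_diffSet_of_fracPart_mem_F {a : ℕ} (ha : 2 ≤ a) {X : Set ℝ} (hc : IsCompact X)
    (hX : MapsTo (Ta a) X X) {s x : ℝ} (hs : 0 < s) (h : fracPart a s ∈ F a X x) :
    (s : AddCircle (1:ℝ)) ∈ diffSet X := by
  have ha1 : (1 : ℝ) < a := by exact_mod_cast ha
  obtain ⟨U, hU, hUt⟩ := mapClusterPt_iff_ultrafilter.1 h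
  -- With `d = |u - v|`, the number `r` satisfies `d = s a^{-r}` and `r` is close to an integer `k`.
  set r : ℝ × ℝ → ℝ := fun p => Real.logb a s - Real.logb a |p.1 - p.2|
  have hr : Tendsto (fun p => |r p - round (r p)|) U (𝓝 0) := by
    have h1 := (tendsto_iff_norm_sub_tendsto_zero.1 hUt)
    refine h1.congr fun p => ?_
    rw [← UnitAddCircle.norm_eq]
    unfold fracPart
    rw [← AddCircle.coe_sub, abs_of_pos hs]
    congr 2
    simp only [r]
    ring
  have hlim : Tendsto (fun p => ((round (r p) : ℝ) - r p)) U (𝓝 0) := by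
    rw [tendsto_zero_iff_abs_tendsto_zero]
    exact hr.congr fun p => abs_sub_comm _ _
  have hlim2 : Tendsto (fun p => (a : ℝ) ^ ((round (r p) : ℝ) - r p) * s) U (𝓝 s) := by
    have := ((Real.continuous_const_rpow (by positivity : (a : ℝ) ≠ 0)).tendsto 0).comp hlim
    simpa using this.mul_const s
  have hlim3 := ((AddCircle.continuous_mk' (1 : ℝ)).tendsto s).comp hlim2
  refine (isClosed_diffSet hc).mem_of_tendsto hlim3 ?_
  have hsmall : ∀ᶠ p in (U : Filter (ℝ × ℝ)), |p.1 - p.2| < s := by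
    have : Tendsto (fun p : ℝ × ℝ => |p.1 - p.2|) (𝓝 (x, x)) (𝓝 0) := by
      have := (continuous_fst.sub continuous_snd).abs.tendsto ((x, x) : ℝ × ℝ)
      simpa using this
    exact hU (mem_inf_of_left (this.eventually_lt_const hs))
  filter_upwards [hsmall, hU (eventually_pairs X x)] with p hps hpX
  have hd : 0 < |p.1 - p.2| := abs_pos.2 (sub_ne_zero.2 hpX.2.2)
  have hrpos : 0 < r p := sub_pos.2 (Real.logb_lt_logb ha1 hd hps)
  obtain ⟨k, hk⟩ : ∃ k : ℕ, round (r p) = k :=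
    Int.eq_ofNat_of_zero_le (by rw [round_eq]; exact Int.floor_nonneg.2 (by positivity))
  have hmem : ((|p.1 - p.2| : ℝ) : AddCircle (1:ℝ)) ∈ diffSet X := by
    rcases abs_choice (p.1 - p.2) with e | e
    · exact ⟨p.1, hpX.1, p.2, hpX.2.1, by rw [e]⟩
    · exact ⟨p.2, hpX.2.1, p.1, hpX.1, by rw [e, neg_sub]⟩
  have := pow_mul_mem_diffSet hX hmem k
  convert this using 1
  simp only [Function.comp]
  rw [hk, Int.cast_natCast]
  have e1 : s = (a : ℝ) ^ Real.logb a s := (Real.rpow_logb (by positivity) ha1.ne' hs).symm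
  have e2 : |p.1 - p.2| = (a : ℝ) ^ Real.logb a |p.1 - p.2| :=
    (Real.rpow_logb (by positivity) ha1.ne' hd).symm
  conv_rhs => rw [e2]
  conv_lhs => rw [e1]
  rw [← Real.rpow_natCast, ← Real.rpow_add (by positivity), ← Real.rpow_add (by positivity)]
  simp only [r]
  ring_nf
  rfl

lemma F_ne_univ {a : ℕ} (ha : 2 ≤ a) {X : Set ℝ} (hc : IsCompact X) (hne : X.Nonempty)
    (hX : MapsTo (Ta a) X X) (hres : SelfRestricted X) (x : ℝ) : F a X x ≠ univ := by
  intro h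
  obtain ⟨t, ht⟩ := (ne_univ_iff_exists_notMem _).1 hres
  obtain ⟨z, rfl⟩ := QuotientAddGroup.mk_surjective t
  change (z : AddCircle (1:ℝ)) ∉ diffSet X at ht
  rw [← coe_fract] at ht
  rcases (Int.fract_nonneg z).eq_or_lt with h0 | h0
  · rw [← h0] at ht
    obtain ⟨y, hy⟩ := hne
    exact ht ⟨y, hy, y, hy, by simp⟩
  · exact ht (coe_mem_diffSet_of_fracPart_mem_F ha hc hX h0 (h ▸ mem_univ (fracPart a _)))

/-! ### Conclusion -/

/-- A closed non-empty proper subset of the circle is not forward invariant under an irrational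
rotation. -/
lemma exists_rat_of_add_subset {A : Set (AddCircle (1:ℝ))} (hcl : IsClosed A) (hne : A.Nonempty)
    (hA : A ≠ univ) {c : ℝ} (h : ∀ t ∈ A, t + (c : AddCircle (1:ℝ)) ∈ A) : ∃ q : ℚ, c = q := by
  by_contra hq
  have hirr : Irrational (c / 1) := by
    rw [div_one]
    rintro ⟨q, hq'⟩
    exact hq ⟨q, hq'.symm⟩
  have hdense : DenseRange (fun n : ℕ => n • (c : AddCircle (1:ℝ))) :=
    denseRange_zsmul_iff_nsmul.1 (AddCircle.denseRange_zsmul_coe_iff.2 hirr)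
  obtain ⟨t, ht⟩ := hne
  have hn : ∀ n : ℕ, t + n • (c : AddCircle (1:ℝ)) ∈ A := by
    intro n
    induction n with
    | zero => simpa using ht
    | succ n ih =>
      rw [succ_nsmul, ← add_assoc]
      exact h _ ih
  apply hA
  refine eq_univ_of_forall fun y => ?_
  have hcl' : IsClosed {w | t + w ∈ A} := hcl.preimage (continuous_const.add continuous_id)
  have : y - t ∈ {w | t + w ∈ A} :=
    hcl'.closure_subset_iff.2 (range_subset_iff.2 hn) (hdense (y - t))
  simpa using this

lemma injective_of_deriv_ne_zero {f : ℝ → ℝ} (hf : ∀ x, deriv f x ≠ 0) :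
    Function.Injective f := by
  have hd : ∀ x, HasDerivAt f (deriv f x) x := fun x =>
    (differentiableAt_of_deriv_ne_zero (hf x)).hasDerivAt
  rcases hasDerivWithinAt_forall_lt_or_forall_gt_of_forall_ne convex_univ
    (fun x _ => (hd x).hasDerivWithinAt) (fun x _ => hf x) with h | h
  · exact (strictAnti_of_deriv_neg fun x => h x trivial).injective
  · exact (strictMono_of_deriv_pos fun x => h x trivial).injective

/-- A continuous bijection of a compact set pulls back dense subsets to dense subsets. -/
lemma subset_closure_preimage {X S : Set ℝ} (hc : IsCompact X) {f : ℝ → ℝ} (hf : Continuous f)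
    (hinj : Function.Injective f) (himg : f '' X = X) (hS : X ⊆ closure (X ∩ S)) :
    X ⊆ closure {y | y ∈ X ∧ f y ∈ S} := by
  have hK : IsCompact (closure {y | y ∈ X ∧ f y ∈ S}) :=
    hc.of_isClosed_subset isClosed_closure (closure_minimal (fun y hy => hy.1) hc.isClosed)
  have h1 : X ∩ S ⊆ f '' closure {y | y ∈ X ∧ f y ∈ S} := by
    rintro z ⟨hzX, hzS⟩
    rw [← himg] at hzX
    obtain ⟨y, hy, rfl⟩ := hzX
    exact ⟨y, subset_closure ⟨hy, hzS⟩, rfl⟩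
  have h2 := closure_minimal h1 (hK.image hf).isClosed
  intro x hx
  obtain ⟨y, hy, hyx⟩ := h2 (hS (himg ▸ mem_image_of_mem f hx))
  exact hinj hyx ▸ hy

end LocalDiff

/-- **Theorem 1.2(3).** If `X ⊆ [0,1]` is a closed, perfect, transitive, non-trivial and
self-restricted `T_a`-invariant set, and `f` is a `C¹` local diffeomorphism with `f(X) = X`,
then `{x ∈ X : log_a |f'(x)| ∈ ℚ}` contains a dense relatively open subset of `X`. -/
theorem self_restricted_dense_open_commensurable
    (a : ℕ) (ha : 2 ≤ a) (X : Set ℝ) (hXsub : X ⊆ Set.Icc 0 1)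
    (hXcl : IsClosed X) (hXperf : ∀ x ∈ X, x ∈ closure (X \ {x}))
    (hXtrans : ∃ x ∈ X, IsTransitivePoint a X x)
    (hXinf : X.Infinite) (hXne : X ≠ Set.Icc 0 1)
    (hXres : SelfRestricted X)
    (hXinv : Set.MapsTo (Ta a) X X)
    (f : ℝ → ℝ) (hf1 : ContDiff ℝ 1 f) (hf2 : ∀ x, deriv f x ≠ 0)
    (himg : f '' X = X) :
    ∃ U : Set ℝ, IsOpen U ∧ X ⊆ closure (U ∩ X) ∧
      ∀ x ∈ U ∩ X, ∃ q : ℚ, Real.logb a |deriv f x| = q := by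
  have hc : IsCompact X := isCompact_Icc.of_isClosed_subset hXcl hXsub
  obtain ⟨z, hzX, hz⟩ := hXtrans
  have hiter : ∀ n, (Ta a)^[n] z ∈ X := fun n => hXinv.iterate n hzX
  have hinj := LocalDiff.injective_of_deriv_ne_zero hf2
  have hfX : MapsTo f X X := fun y hy => himg ▸ mem_image_of_mem f hy
  have hdense : X ⊆ closure {y | y ∈ X ∧ f y ∈ {w | ∃ n : ℕ, 1 ≤ n ∧ (Ta a)^[n] z = w}} := by
    refine LocalDiff.subset_closure_preimage hc hf1.continuous hinj himg ?_
    rwa [inter_eq_right.2 (by rintro _ ⟨n, -, rfl⟩; exact hiter n)]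
  have hcont : Continuous fun y => fracPart a (deriv f y) :=
    continuous_iff_continuousAt.2 fun y => ContinuousAt.comp (f := deriv f)
      (LocalDiff.continuousAt_fracPart (hf2 y)) (hf1.continuous_deriv le_rfl).continuousAt
  have hadd : ∀ y ∈ X, ∀ t ∈ LocalDiff.F a X z,
      t + fracPart a (deriv f y) ∈ LocalDiff.F a X z := by
    intro y hy t ht
    have hcl : IsClosed {y | t + fracPart a (deriv f y) ∈ LocalDiff.F a X z} :=
      (LocalDiff.isClosed_F a X z).preimage (continuous_const.add hcont)
    refine hcl.closure_subset_iff.2 ?_ (hdense hy)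
    rintro w ⟨hwX, n, -, hn⟩
    have h1 := LocalDiff.F_add_subset (hf1.hasStrictDerivAt one_ne_zero) (hf2 w) hfX
      (LocalDiff.F_transitive_subset ha hXinv hXinf hz hwX ht)
    rw [← hn] at h1
    exact LocalDiff.F_transitive_subset ha hXinv hXinf
      (LocalDiff.transitive_iterate hXperf hz n) hzX h1
  refine ⟨univ, isOpen_univ, by simp, fun y hy => ?_⟩
  obtain ⟨q, hq⟩ := LocalDiff.exists_rat_of_add_subset (LocalDiff.isClosed_F a X z)
    (LocalDiff.F_nonempty a hzX (hXperf z hzX))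
    (LocalDiff.F_ne_univ ha hc ⟨z, hzX⟩ hXinv hXres z) (hadd y hy.2)
  refine ⟨-q, ?_⟩
  push_cast
  rw [← hq, neg_neg]
end
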